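/- Let X and Y be finite-dimensional Banach spaces and let G ∈ L(X,Y) with ‖G‖ = 1. Define C̃ := { ψ_{x,y*} ∈ L(X,Y)* : x ∈ S_X, y* ∈ S_{Y*}, ‖Gx‖ = 1 }. Then the set { φ ∈ L(X,Y)* : |φ(T)| ≤ ‖T‖_G for all T ∈ L(X,Y) } (i.e., the unit ball of the dual of (L(X,Y), ‖·‖_G)) equals the convex hull of C̃. -/

import Mathlib

open Filter Topology

variable {𝕜 : Type*} [RCLike 𝕜]

/-- The `G`-norm of an operator `T`:
`‖T‖_G := inf_{δ>0} sup {‖Tx‖ : x ∈ S_X, ‖Gx‖ > 1 - δ}`. -/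
noncomputable def Gnorm {X Y : Type*} [NormedAddCommGroup X] [NormedSpace 𝕜 X]
    [NormedAddCommGroup Y] [NormedSpace 𝕜 Y] (G T : X →L[𝕜] Y) : ℝ :=
  ⨅ δ : {δ : ℝ // 0 < δ},
    sSup {r : ℝ | ∃ x : X, ‖x‖ = 1 ∧ 1 - (δ : ℝ) < ‖G x‖ ∧ r = ‖T x‖}

/-- `C̃ := { ψ_{x, y*} = y* ⊗ x : x ∈ S_X, y* ∈ S_{Y*}, ‖Gx‖ = 1 }`, where
`ψ_{x,y*}(S) = y*(Sx)`. -/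
def Ctilde {X Y : Type*} [NormedAddCommGroup X] [NormedSpace 𝕜 X]
    [NormedAddCommGroup Y] [NormedSpace 𝕜 Y] (G : X →L[𝕜] Y) :
    Set ((X →L[𝕜] Y) →L[𝕜] 𝕜) :=
  {ψ | ∃ (x : X) (f : Y →L[𝕜] 𝕜), ‖x‖ = 1 ∧ ‖f‖ = 1 ∧ ‖G x‖ = 1 ∧
    ∀ S : X →L[𝕜] Y, ψ S = f (S x)}

/-- In finite dimension the `G`-norm is attained at a point where `G` attains its norm. -/
theorem Gnorm_le_attained {X Y : Type*}
    [NormedAddCommGroup X] [NormedSpace 𝕜 X] [FiniteDimensional 𝕜 X]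
    [NormedAddCommGroup Y] [NormedSpace 𝕜 Y]
    (G : X →L[𝕜] Y) (hG : ‖G‖ = 1) (T : X →L[𝕜] Y) :
    ∃ x : X, ‖x‖ = 1 ∧ ‖G x‖ = 1 ∧ Gnorm G T ≤ ‖T x‖ := by
  have : ProperSpace X := FiniteDimensional.proper 𝕜 X
  have hle : ∀ x : X, ‖x‖ = 1 → ‖G x‖ ≤ 1 := by
    intro x hx
    have := G.le_opNorm x
    rw [hG, hx] at this
    linarith
  have hne : ∀ δ : ℝ, 0 < δ → ∃ x : X, ‖x‖ = 1 ∧ 1 - δ < ‖G x‖ := by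
    intro δ hδ
    by_contra! h
    have : ‖G‖ ≤ max (1 - δ) 0 := by
      refine G.opNorm_le_bound (le_max_right _ _) fun x => ?_
      by_cases hx : x = 0
      · simp [hx]
      have hx' : 0 < ‖x‖ := norm_pos_iff.2 hx
      have h1 := h (((‖x‖⁻¹ : ℝ) : 𝕜) • x) (by
        rw [norm_smul]; simp [hx])
      rw [map_smul, norm_smul] at h1
      simp only [RCLike.norm_ofReal, abs_inv, abs_norm] at h1
      rw [inv_mul_le_iff₀ hx'] at h1
      nlinarith [le_max_left (1 - δ) 0]
    rw [hG] at this
    rcases le_max_iff.1 this with h | h <;> linarith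
  have hseq : ∀ n : ℕ, ∃ x : X, ‖x‖ = 1 ∧ 1 - 1 / ((n : ℝ) + 1) < ‖G x‖ ∧
      Gnorm G T - 1 / ((n : ℝ) + 1) < ‖T x‖ := by
    intro n
    have hδ : (0 : ℝ) < 1 / ((n : ℝ) + 1) := Nat.one_div_pos_of_nat
    have hS : Gnorm G T ≤ sSup {r : ℝ | ∃ x : X, ‖x‖ = 1 ∧
        1 - (1 / ((n : ℝ) + 1)) < ‖G x‖ ∧ r = ‖T x‖} := by
      refine ciInf_le (ι := {δ : ℝ // 0 < δ}) ⟨0, ?_⟩ ⟨1 / ((n : ℝ) + 1), hδ⟩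
      rintro _ ⟨δ, rfl⟩
      apply Real.sSup_nonneg
      rintro r ⟨x, _, _, rfl⟩
      exact norm_nonneg _
    obtain ⟨x, hx⟩ := hne _ hδ
    obtain ⟨_, ⟨z, hz1, hz2, rfl⟩, hz⟩ := exists_lt_of_lt_csSup
      (⟨‖T x‖, x, hx.1, hx.2, rfl⟩ : Set.Nonempty {r : ℝ | ∃ x : X, ‖x‖ = 1 ∧
        1 - (1 / ((n : ℝ) + 1)) < ‖G x‖ ∧ r = ‖T x‖})
      (show Gnorm G T - 1 / ((n : ℝ) + 1) < _ by linarith)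
    exact ⟨z, hz1, hz2, hz⟩
  choose u hu1 hu2 hu3 using hseq
  obtain ⟨a, ha, k, hk, hlim⟩ := (isCompact_sphere (0 : X) 1).tendsto_subseq
    (x := u) (fun n => by simpa using hu1 n)
  have h0 : Tendsto (fun n : ℕ => 1 / ((k n : ℝ) + 1)) atTop (𝓝 0) :=
    tendsto_one_div_add_atTop_nhds_zero_nat.comp hk.tendsto_atTop
  have ha1 : ‖a‖ = 1 := by simpa using ha
  refine ⟨a, ha1, le_antisymm (hle a ha1) ?_, ?_⟩
  · have h1 : Tendsto (fun n => ‖G (u (k n))‖) atTop (𝓝 ‖G a‖) :=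
      ((G.continuous.norm).tendsto a).comp hlim
    have h2 := (tendsto_const_nhds (x := (1 : ℝ))).sub h0
    simpa using le_of_tendsto_of_tendsto' h2 h1 fun n => (hu2 (k n)).le
  · have h1 : Tendsto (fun n => ‖T (u (k n))‖) atTop (𝓝 ‖T a‖) :=
      ((T.continuous.norm).tendsto a).comp hlim
    have h2 := (tendsto_const_nhds (x := Gnorm G T)).sub h0
    simpa using le_of_tendsto_of_tendsto' h2 h1 fun n => (hu3 (k n)).le

theorem norm_le_Gnorm {X Y : Type*}
    [NormedAddCommGroup X] [NormedSpace 𝕜 X]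
    [NormedAddCommGroup Y] [NormedSpace 𝕜 Y]
    (G T : X →L[𝕜] Y) (x : X) (hx : ‖x‖ = 1) (hGx : ‖G x‖ = 1) :
    ‖T x‖ ≤ Gnorm G T := by
  have : Nonempty {δ : ℝ // 0 < δ} := ⟨⟨1, one_pos⟩⟩
  refine le_ciInf fun δ => le_csSup ⟨‖T‖, ?_⟩ ⟨x, hx, ?_, rfl⟩
  · rintro _ ⟨z, hz, _, rfl⟩
    simpa [hz] using T.le_opNorm z
  · rw [hGx]; linarith [δ.2]

theorem isCompact_Ctilde {X Y : Type*}
    [NormedAddCommGroup X] [NormedSpace 𝕜 X] [FiniteDimensional 𝕜 X]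
    [NormedAddCommGroup Y] [NormedSpace 𝕜 Y] [FiniteDimensional 𝕜 Y]
    (G : X →L[𝕜] Y) : IsCompact (Ctilde G) := by
  have : ProperSpace X := FiniteDimensional.proper 𝕜 X
  have : ProperSpace (Y →L[𝕜] 𝕜) := FiniteDimensional.proper 𝕜 _
  have h1 : IsCompact (Metric.sphere (0 : X) 1 ∩ {x | ‖G x‖ = 1}) :=
    (isCompact_sphere _ _).inter_right (isClosed_eq (by fun_prop) continuous_const)
  have h2 := h1.prod (isCompact_sphere (0 : Y →L[𝕜] 𝕜) 1)
  have hc : Continuous (fun p : X × (Y →L[𝕜] 𝕜) =>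
      p.2.comp (ContinuousLinearMap.apply 𝕜 Y p.1)) := by
    fun_prop
  convert h2.image hc using 1
  ext ψ
  simp only [Ctilde, Set.mem_ofPred_eq, Set.mem_image, Set.mem_prod, Set.mem_inter_iff,
    mem_sphere_zero_iff_norm, Prod.exists]
  constructor
  · rintro ⟨x, f, hx, hf, hGx, h⟩
    exact ⟨x, f, ⟨⟨hx, hGx⟩, hf⟩, by ext S; simp [h]⟩
  · rintro ⟨x, f, ⟨⟨hx, hGx⟩, hf⟩, rfl⟩
    exact ⟨x, f, hx, hf, hGx, fun S => by simp⟩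

/-- In a finite-dimensional real space, the convex hull of a compact set is compact
(a consequence of the Carathéodory theorem). -/
theorem isCompact_convexHull_of_finiteDim {E : Type*} [NormedAddCommGroup E] [NormedSpace ℝ E]
    [FiniteDimensional ℝ E] {s : Set E} (hs : IsCompact s) : IsCompact (convexHull ℝ s) := by
  have key : convexHull ℝ s = ⋃ n ∈ Finset.range (Module.finrank ℝ E + 2),
      (fun p : (Fin n → ℝ) × (Fin n → E) => ∑ i, p.1 i • p.2 i) ''
        (stdSimplex ℝ (Fin n) ×ˢ Set.pi Set.univ fun _ => s) := by
    apply Set.Subset.antisymm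
    · intro x hx
      obtain ⟨ι, _, z, w, hz, hai, hw, hw1, hwz⟩ := eq_pos_convex_span_of_mem_convexHull hx
      have hcard : Fintype.card ι ≤ Module.finrank ℝ E + 1 :=
        hai.card_le_finrank_succ.trans
          (Nat.succ_le_succ (Submodule.finrank_le _))
      simp only [Set.mem_iUnion]
      refine ⟨Fintype.card ι, Finset.mem_range.2 (by omega),
        (w ∘ (Fintype.equivFin ι).symm, z ∘ (Fintype.equivFin ι).symm), ⟨⟨?_, ?_⟩, ?_⟩, ?_⟩
      · intro i
        exact (hw _).le
      · rw [← hw1]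
        exact (Fintype.equivFin ι).symm.sum_comp w
      · intro i _
        exact hz ⟨_, rfl⟩
      · rw [← hwz]
        exact (Fintype.equivFin ι).symm.sum_comp fun i => w i • z i
    · intro x hx
      simp only [Set.mem_iUnion] at hx
      obtain ⟨n, _, ⟨w, z⟩, ⟨⟨hw, hw1⟩, hz⟩, rfl⟩ := hx
      exact (convex_convexHull ℝ s).sum_mem (fun i _ => hw i) hw1
        fun i _ => subset_convexHull ℝ s (hz i trivial)
  rw [key]
  refine (Finset.range _).isCompact_biUnion fun n _ => ?_
  refine ((isCompact_stdSimplex ℝ (Fin n)).prod (isCompact_univ_pi fun _ => hs)).image ?_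
  fun_prop

/-- Hahn-Banach separation from the convex hull of a compact set, in finite dimension. -/
theorem separate_convexHull {E : Type*} [NormedAddCommGroup E] [NormedSpace 𝕜 E]
    [NormedSpace ℝ E] [IsScalarTower ℝ 𝕜 E]
    [FiniteDimensional 𝕜 E] {s : Set E} (hs : IsCompact s) {φ : E} (hn : φ ∉ convexHull ℝ s) :
    ∃ (F : E →L[𝕜] 𝕜) (u : ℝ), (∀ a ∈ s, RCLike.re (F a) < u) ∧ u < RCLike.re (F φ) := by
  have : FiniteDimensional ℝ E := FiniteDimensional.trans ℝ 𝕜 E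
  obtain ⟨F, u, hF, hu⟩ := RCLike.geometric_hahn_banach_closed_point (𝕜 := 𝕜)
    (convex_convexHull ℝ s) (isCompact_convexHull_of_finiteDim hs).isClosed hn
  exact ⟨F, u, fun a ha => hF a (subset_convexHull ℝ s ha), hu⟩

/-- Every functional on the dual of a finite-dimensional space is an evaluation. -/
theorem exists_eval_eq {V : Type*} [NormedAddCommGroup V] [NormedSpace 𝕜 V]
    [FiniteDimensional 𝕜 V] (F : (V →L[𝕜] 𝕜) →L[𝕜] 𝕜) :
    ∃ T : V, ∀ ψ : V →L[𝕜] 𝕜, F ψ = ψ T := by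
  refine ⟨(Module.evalEquiv 𝕜 V).symm (F.toLinearMap ∘ₗ (LinearMap.toContinuousLinearMap :
          (V →ₗ[𝕜] 𝕜) ≃ₗ[𝕜] (V →L[𝕜] 𝕜)).toLinearMap), fun ψ => ?_⟩
  have := Module.apply_evalEquiv_symm_apply 𝕜 V ψ.toLinearMap
        (F.toLinearMap ∘ₗ (LinearMap.toContinuousLinearMap :
          (V →ₗ[𝕜] 𝕜) ≃ₗ[𝕜] (V →L[𝕜] 𝕜)).toLinearMap)
  exact this.symm

/-- Separation by an evaluation in the dual of a finite-dimensional space. -/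
theorem separate_dual {V : Type*} [NormedAddCommGroup V] [NormedSpace 𝕜 V]
    [FiniteDimensional 𝕜 V] {s : Set (V →L[𝕜] 𝕜)} (hs : IsCompact s) {φ : V →L[𝕜] 𝕜}
    (hn : φ ∉ convexHull ℝ s) :
    ∃ (T : V) (u : ℝ), (∀ a ∈ s, RCLike.re (a T) < u) ∧ u < RCLike.re (φ T) := by
  obtain ⟨F, u, hF, hu⟩ := separate_convexHull (𝕜 := 𝕜) hs hn
  obtain ⟨T, hT⟩ := exists_eval_eq F
  exact ⟨T, u, fun a ha => hT a ▸ hF a ha, hT φ ▸ hu⟩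

/-- For finite-dimensional `X, Y` and norm-one `G ∈ L(X,Y)`, the unit ball of the dual of
`(L(X,Y), ‖·‖_G)` equals the convex hull of `C̃`. -/
theorem stmt_14 {X Y : Type*}
    [NormedAddCommGroup X] [NormedSpace 𝕜 X] [FiniteDimensional 𝕜 X]
    [NormedAddCommGroup Y] [NormedSpace 𝕜 Y] [FiniteDimensional 𝕜 Y]
    (G : X →L[𝕜] Y) (hG : ‖G‖ = 1)
    (hGnorm : ∀ T : X →L[𝕜] Y, Gnorm G T = 0 → T = 0) :
    {φ : (X →L[𝕜] Y) →L[𝕜] 𝕜 | ∀ T : X →L[𝕜] Y, ‖φ T‖ ≤ Gnorm G T}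
      = convexHull ℝ (Ctilde G) := by
  apply Set.Subset.antisymm
  · intro φ hφ
    by_contra hn
    obtain ⟨T, u, hF, hu⟩ := separate_dual (isCompact_Ctilde G) hn
    obtain ⟨x, hx, hGx, hTx⟩ := Gnorm_le_attained G hG T
    have : Nontrivial Y := ⟨G x, 0, fun h => by simp [h] at hGx⟩
    obtain ⟨f, hf, hfT⟩ := exists_dual_vector' 𝕜 (T x)
    have h1 := hF _
      (show f.comp (ContinuousLinearMap.apply 𝕜 Y x) ∈ Ctilde G from
        ⟨x, f, hx, hf, hGx, fun S => by simp⟩)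
    simp only [ContinuousLinearMap.comp_apply, ContinuousLinearMap.apply_apply, hfT,
      RCLike.ofReal_re] at h1
    have h2 := RCLike.re_le_norm (φ T)
    have h3 := hφ T
    linarith
  · refine convexHull_min ?_ ?_
    · rintro ψ ⟨x, f, hx, hf, hGx, h⟩ T
      rw [h]
      refine le_trans ?_ (norm_le_Gnorm G T x hx hGx)
      simpa [hf] using f.le_opNorm (T x)
    · intro φ hφ ψ hψ a b ha hb hab T
      have h1 := hφ T
      have h2 := hψ T
      calc ‖(a • φ + b • ψ) T‖ ≤ ‖a • φ T‖ + ‖b • ψ T‖ := norm_add_le _ _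
        _ = a * ‖φ T‖ + b * ‖ψ T‖ := by
          rw [norm_smul, norm_smul, Real.norm_of_nonneg ha, Real.norm_of_nonneg hb]
        _ ≤ a * Gnorm G T + b * Gnorm G T := by gcongr
        _ = Gnorm G T := by rw [← add_mul, hab, one_mul]
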